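/- Let p(x) = Σ_{j=0}^r b_{α(j)} x^{α(j)} + b_β x^β be a circuit polynomial in n real variables with β ∈ (2ℕ)^n and b_β > 0 (so p is a sum of monomial squares), or with |b_β| ≤ Θ_p. Conversely, combining both cases: p is nonnegative on ℝ^n if and only if p is a sum of monomial squares, or |b_β| ≤ Θ_p. -/

import Mathlib

open Filter Topology in
theorem circ_solve
    (n r : ℕ)
    (α : Fin (r + 1) → Fin n → ℕ) (β : Fin n → ℕ)
    (lam : Fin (r + 1) → ℝ)
    (hlam : ∀ j, 0 < lam j)
    (hlamsum : ∑ j, lam j = 1)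
    (hbar : ∀ i, (β i : ℝ) = ∑ j, lam j * (α j i : ℝ))
    (huniq : ∀ mu : Fin (r + 1) → ℝ, (∀ j, 0 < mu j) → ∑ j, mu j = 1 →
        (∀ i, (β i : ℝ) = ∑ j, mu j * (α j i : ℝ)) → mu = lam)
    (d : Fin (r + 1) → ℝ) :
    ∃ (y : Fin n → ℝ) (s : ℝ), ∀ j, ∑ i, (α j i : ℝ) * y i + s = d j := by
  let T : (Fin (r+1) → ℝ) →ₗ[ℝ] (Fin n → ℝ) × ℝ :=
    { toFun := fun g => (fun i => ∑ j, g j * (α j i : ℝ), ∑ j, g j)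
      map_add' := by
        intro g h
        ext <;> simp [add_mul, Finset.sum_add_distrib]
      map_smul' := by
        intro a g
        ext <;> simp [mul_assoc, Finset.mul_sum] }
  have hT : LinearMap.ker T = ⊥ := by
    rw [LinearMap.ker_eq_bot']
    intro g hg
    have h1 : ∀ i, ∑ j, g j * (α j i : ℝ) = 0 := fun i => congrFun (congrArg Prod.fst hg) i
    have h2 : ∑ j, g j = 0 := congrArg Prod.snd hg
    have hev : ∀ᶠ ε : ℝ in 𝓝 0, ∀ j, 0 < lam j + ε * g j := by
      rw [eventually_all]
      intro j
      have hc : ContinuousAt (fun ε : ℝ => lam j + ε * g j) 0 := by fun_prop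
      have := hc.eventually (lt_mem_nhds (a := 0) (by simpa using hlam j))
      exact this
    obtain ⟨ε, hε, hne⟩ := ((hev.filter_mono nhdsWithin_le_nhds).and
      (self_mem_nhdsWithin (a := (0:ℝ)) (s := {0}ᶜ))).exists
    have := huniq (fun j => lam j + ε * g j) hε
      (by rw [Finset.sum_add_distrib, ← Finset.mul_sum, h2, hlamsum]; simp)
      (by
        intro i
        simp only [add_mul, Finset.sum_add_distrib, mul_assoc]
        rw [← Finset.mul_sum, h1, ← hbar]; simp)
    ext j
    have hj := congrFun this j
    simp at hj
    rcases hj with hj | hj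
    · exact absurd hj hne
    · simpa using hj
  obtain ⟨L, hL⟩ := LinearMap.exists_leftInverse_of_injective T hT
  let f : (Fin n → ℝ) × ℝ → ℝ := fun w => ∑ j, L w j * d j
  refine ⟨fun i => f (Pi.single i 1, 0), f (0, 1), fun j => ?_⟩
  have h0 : T (Pi.single j 1) = ∑ i, (α j i : ℝ) • ((Pi.single i 1, 0) : (Fin n → ℝ) × ℝ) + (0, 1) := by
    ext k
    · simp [T, Pi.single_apply, Prod.fst_sum, Finset.sum_apply]
    · simp [T, Prod.snd_sum]
  have h1 : L (T (Pi.single j 1)) = Pi.single j 1 := by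
    rw [← LinearMap.comp_apply, hL]; rfl
  have h2 : ∑ k, L (T (Pi.single j 1)) k * d k = d j := by
    rw [h1]; simp [Pi.single_apply]
  rw [← h2, h0]
  simp only [f, map_add, map_sum, map_smul, Pi.add_apply, Finset.sum_apply, Pi.smul_apply,
    smul_eq_mul, add_mul, Finset.sum_add_distrib, Finset.sum_mul, Finset.mul_sum]
  rw [Finset.sum_comm]
  simp only [mul_assoc]

theorem circ_mon (n r : ℕ)
    (α : Fin (r + 1) → Fin n → ℕ) (β : Fin n → ℕ)
    (lam : Fin (r + 1) → ℝ)
    (hlam : ∀ j, 0 < lam j)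
    (hbar : ∀ i, (β i : ℝ) = ∑ j, lam j * (α j i : ℝ)) (x : Fin n → ℝ) (hx : ∀ i, 0 ≤ x i) :
    ∏ j, (∏ i, x i ^ α j i) ^ lam j = ∏ i, x i ^ β i := by
  have : ∀ i, x i ^ β i = ∏ j, (x i ^ α j i) ^ lam j := by
    intro i
    rw [← Real.rpow_natCast, hbar, Real.rpow_sum_of_nonneg (hx i)
      (fun j _ => mul_nonneg (hlam j).le (Nat.cast_nonneg _))]
    refine Finset.prod_congr rfl fun j _ => ?_
    rw [mul_comm, Real.rpow_mul (hx i), Real.rpow_natCast]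
  simp_rw [this]
  rw [Finset.prod_comm]
  refine Finset.prod_congr rfl fun j _ => ?_
  rw [Real.finsetProd_rpow]
  exact fun i _ => pow_nonneg (hx i) _


/-- (Nonnegativity of circuit polynomials, both directions
combined.) A circuit polynomial
`p(x) = Σ_{j=0}^r b_{α(j)} x^{α(j)} + b_β x^β` is nonnegative on `ℝ^n` if and
only if `p` is a sum of monomial squares (i.e. `β ∈ (2ℕ)^n` and `b_β > 0`) or
`|b_β| ≤ Θ_p`, where `Θ_p = Π_j (b_{α(j)}/λ_j)^{λ_j}` is the circuit number. -/
theorem circuit_polynomial_nonneg_iff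
    (n r : ℕ) (hr : r ≤ n)
    (α : Fin (r + 1) → Fin n → ℕ) (β : Fin n → ℕ)
    (b : Fin (r + 1) → ℝ) (c : ℝ) (lam : Fin (r + 1) → ℝ)
    (hb : ∀ j, 0 < b j)
    (heven : ∀ j i, Even (α j i))
    (hlam : ∀ j, 0 < lam j)
    (hlamsum : ∑ j, lam j = 1)
    (hbar : ∀ i, (β i : ℝ) = ∑ j, lam j * (α j i : ℝ))
    (huniq : ∀ mu : Fin (r + 1) → ℝ, (∀ j, 0 < mu j) → ∑ j, mu j = 1 →
        (∀ i, (β i : ℝ) = ∑ j, mu j * (α j i : ℝ)) → mu = lam) :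
    (∀ x : Fin n → ℝ,
        0 ≤ (∑ j, b j * ∏ i, x i ^ α j i) + c * ∏ i, x i ^ β i) ↔
      (((∀ i, Even (β i)) ∧ 0 < c) ∨ |c| ≤ ∏ j, (b j / lam j) ^ lam j) := by
  have hΘ0 : 0 < ∏ j, (b j / lam j) ^ lam j :=
    Finset.prod_pos fun j _ => Real.rpow_pos_of_pos (div_pos (hb j) (hlam j)) _
  have habsα : ∀ (x : Fin n → ℝ) j, ∏ i, |x i| ^ α j i = ∏ i, x i ^ α j i := fun x j =>
    Finset.prod_congr rfl fun i _ => (heven j i).pow_abs _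
  constructor
  · intro h
    obtain ⟨y, s, hys⟩ := circ_solve n r α β lam hlam hlamsum hbar huniq
      (fun j => - Real.log (b j / lam j))
    let x : Fin n → ℝ := fun i => Real.exp (y i)
    have hx : ∀ i, 0 < x i := fun i => Real.exp_pos _
    have hm : ∀ j, ∏ i, x i ^ α j i = Real.exp (-s) / (b j / lam j) := by
      intro j
      have h1 : ∏ i, x i ^ α j i = Real.exp (∑ i, (α j i : ℝ) * y i) := by
        rw [Real.exp_sum]
        exact Finset.prod_congr rfl fun i _ => (Real.exp_nat_mul _ _).symm
      have h2 : ∑ i, (α j i : ℝ) * y i = -s - Real.log (b j / lam j) := by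
        linarith [hys j]
      rw [h1, h2, Real.exp_sub, Real.exp_log (div_pos (hb j) (hlam j))]
    have hsum : ∑ j, b j * ∏ i, x i ^ α j i = Real.exp (-s) := by
      have : ∀ j, b j * ∏ i, x i ^ α j i = lam j * Real.exp (-s) := by
        intro j
        have := (hb j).ne'
        have := (hlam j).ne'
        rw [hm]; field_simp
      simp_rw [this]
      rw [← Finset.sum_mul, hlamsum, one_mul]
    have hprod : (∏ j, (b j / lam j) ^ lam j) * ∏ i, x i ^ β i = Real.exp (-s) := by
      rw [← circ_mon n r α β lam hlam hbar x (fun i => (hx i).le), ← Finset.prod_mul_distrib]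
      have : ∀ j, (b j / lam j) ^ lam j * (∏ i, x i ^ α j i) ^ lam j
          = Real.exp (-s) ^ lam j := by
        intro j
        have hp := div_pos (hb j) (hlam j)
        rw [hm, ← Real.mul_rpow hp.le (by positivity), mul_div_cancel₀ _ hp.ne']
      simp_rw [this]
      rw [← Real.rpow_sum_of_pos (Real.exp_pos _), hlamsum, Real.rpow_one]
    have hxβ : 0 < ∏ i, x i ^ β i := Finset.prod_pos fun i _ => pow_pos (hx i) _
    have hlow : 0 ≤ (∏ j, (b j / lam j) ^ lam j) + c := by
      have := h x
      rw [hsum, ← hprod, ← add_mul] at this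
      exact nonneg_of_mul_nonneg_left this hxβ
    by_cases hβ : ∀ i, Even (β i)
    · by_cases hc : 0 < c
      · exact Or.inl ⟨hβ, hc⟩
      · right
        rw [abs_of_nonpos (not_lt.mp hc)]; linarith
    · right
      push Not at hβ
      obtain ⟨k, hk⟩ := hβ
      let z : Fin n → ℝ := fun i => if i = k then - x i else x i
      have hz : ∀ i, |z i| = |x i| := by
        intro i; by_cases hi : i = k <;> simp [z, hi]
      have hzα : ∀ j, ∏ i, z i ^ α j i = ∏ i, x i ^ α j i := by
        intro j
        rw [← habsα z, ← habsα x]; simp_rw [hz]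
      have hzβ : ∏ i, z i ^ β i = - ∏ i, x i ^ β i := by
        rw [← Finset.mul_prod_erase _ _ (Finset.mem_univ k),
          ← Finset.mul_prod_erase _ (fun i => x i ^ β i) (Finset.mem_univ k)]
        have : ∏ i ∈ Finset.univ.erase k, z i ^ β i = ∏ i ∈ Finset.univ.erase k, x i ^ β i :=
          Finset.prod_congr rfl fun i hi => by simp [z, Finset.ne_of_mem_erase hi]
        rw [this]
        simp only [z, if_true]
        rw [(Nat.not_even_iff_odd.mp hk).neg_pow, neg_mul]
      have := h z
      simp_rw [hzα] at this
      rw [hsum, hzβ, ← hprod, mul_neg, ← sub_eq_add_neg, ← sub_mul] at this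
      have := nonneg_of_mul_nonneg_left this hxβ
      rw [abs_le]; constructor <;> linarith
  · rintro (⟨hβ, hc⟩ | hc) x
    · refine add_nonneg (Finset.sum_nonneg fun j _ => mul_nonneg (hb j).le
        (Finset.prod_nonneg fun i _ => (heven j i).pow_nonneg _))
        (mul_nonneg hc.le (Finset.prod_nonneg fun i _ => (hβ i).pow_nonneg _))
    · have hP : ∀ j, 0 ≤ ∏ i, |x i| ^ α j i := fun j =>
        Finset.prod_nonneg fun i _ => pow_nonneg (abs_nonneg _) _
      have hQ : ∀ j, 0 ≤ b j / lam j := fun j => (div_pos (hb j) (hlam j)).le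
      have key := Real.geom_mean_le_arith_mean_weighted Finset.univ lam
        (fun j => b j / lam j * ∏ i, |x i| ^ α j i) (fun j _ => (hlam j).le) hlamsum
        (fun j _ => mul_nonneg (hQ j) (hP j))
      simp_rw [fun j => Real.mul_rpow (z := lam j) (hQ j) (hP j)] at key
      rw [Finset.prod_mul_distrib,
        circ_mon n r α β lam hlam hbar (fun i => |x i|) (fun i => abs_nonneg _)] at key
      have h3 : ∑ j, lam j * (b j / lam j * ∏ i, |x i| ^ α j i)
          = ∑ j, b j * ∏ i, x i ^ α j i := by
        refine Finset.sum_congr rfl fun j _ => ?_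
        have := (hlam j).ne'
        rw [habsα]; field_simp
      rw [h3] at key
      have h4 : |c * ∏ i, x i ^ β i| ≤
          (∏ j, (b j / lam j) ^ lam j) * ∏ i, |x i| ^ β i := by
        rw [abs_mul, Finset.abs_prod]
        simp_rw [abs_pow]
        exact mul_le_mul_of_nonneg_right hc
          (Finset.prod_nonneg fun i _ => pow_nonneg (abs_nonneg _) _)
      linarith [neg_abs_le (c * ∏ i, x i ^ β i)]
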